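/- For the sequence r_e = 2^{2(2e+1)} (e = 1, 2, 3, ...), one has f(r_e, {C₄, C₆}) = (1 + o(1))·√(r_e); that is, f(r_e, {C₄, C₆}) / 2^{2e+1} tends to 1 as e tends to infinity. -/

import Mathlib

/-- A complete partition of a graph `G` into `r` parts, encoded as a coloring
`c : V → Fin r` such that between any two distinct color classes there is an edge. -/
def IsCompletePartition {V : Type*} (G : SimpleGraph V) {r : ℕ} (c : V → Fin r) : Prop :=
  ∀ i j : Fin r, i ≠ j → ∃ u v : V, c u = i ∧ c v = j ∧ G.Adj u v

/-- The cycle on `n` vertices (for `n ≥ 3`). -/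
def cycGraph (n : ℕ) : SimpleGraph (ZMod n) :=
  SimpleGraph.fromRel (fun i j => j = i + 1)

/-- `G` contains a subgraph isomorphic to `H`, i.e., there is an injective
graph homomorphism from `H` to `G`. -/
def ContainsCopy {α β : Type*} (H : SimpleGraph α) (G : SimpleGraph β) : Prop :=
  ∃ f : H →g G, Function.Injective f

/-- `f(r, {C₄, C₆})`: the least `k` such that some `{C₄, C₆}`-free graph admits a
complete partition into `r` parts each of size at most `k`. -/
noncomputable def fC4C6 (r : ℕ) : ℕ :=
  sInf {k : ℕ | ∃ (n : ℕ) (G : SimpleGraph (Fin n)),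
    ¬ ContainsCopy (cycGraph 4) G ∧ ¬ ContainsCopy (cycGraph 6) G ∧
    ∃ c : Fin n → Fin r, IsCompletePartition G c ∧
      ∀ i : Fin r, {v : Fin n | c v = i}.ncard ≤ k}


def No4 {V : Type*} (G : SimpleGraph V) : Prop :=
  ∀ a b c d, G.Adj a b → G.Adj b c → G.Adj c d → G.Adj d a → a ≠ c → b ≠ d → False

def No6 {V : Type*} (G : SimpleGraph V) : Prop :=
  ∀ a b c d e f, G.Adj a b → G.Adj b c → G.Adj c d → G.Adj d e → G.Adj e f → G.Adj f a →
    a ≠ c → a ≠ d → a ≠ e → b ≠ d → b ≠ e → b ≠ f → c ≠ e → c ≠ f → d ≠ f → False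

lemma cyc_adj_succ (n : ℕ) (i : ZMod n) (h : i ≠ i + 1) : (cycGraph n).Adj i (i + 1) := by
  simp only [cycGraph, SimpleGraph.fromRel_adj]
  exact ⟨h, Or.inl trivial⟩

lemma no4_of {V : Type*} {G : SimpleGraph V} (h : ¬ ContainsCopy (cycGraph 4) G) : No4 G := by
  intro a b c d h1 h2 h3 h4 n1 n2
  apply h
  let f : ZMod 4 → V := ![a, b, c, d]
  have hs : ∀ i : ZMod 4, G.Adj (f i) (f (i + 1)) := by
    intro i
    change Fin 4 at i
    fin_cases i
    exacts [h1, h2, h3, h4]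
  refine ⟨⟨f, ?_⟩, ?_⟩
  · intro i j hij
    simp only [cycGraph, SimpleGraph.fromRel_adj] at hij
    obtain ⟨_, rfl | rfl⟩ := hij
    · exact hs i
    · exact (hs j).symm
  · have := h1.ne; have := h2.ne; have := h3.ne; have := h4.ne
    intro i j hij
    change Fin 4 at i j
    change f i = f j at hij
    fin_cases i <;> fin_cases j <;> first | rfl | (exfalso; simp [f] at hij; simp_all)

lemma no6_of {V : Type*} {G : SimpleGraph V} (h : ¬ ContainsCopy (cycGraph 6) G) : No6 G := by
  intro a b c d e g h1 h2 h3 h4 h5 h6 m1 m2 m3 m4 m5 m6 m7 m8 m9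
  apply h
  let f : ZMod 6 → V := ![a, b, c, d, e, g]
  have hs : ∀ i : ZMod 6, G.Adj (f i) (f (i + 1)) := by
    intro i
    change Fin 6 at i
    fin_cases i
    exacts [h1, h2, h3, h4, h5, h6]
  refine ⟨⟨f, ?_⟩, ?_⟩
  · intro i j hij
    simp only [cycGraph, SimpleGraph.fromRel_adj] at hij
    obtain ⟨_, rfl | rfl⟩ := hij
    · exact hs i
    · exact (hs j).symm
  · have := h1.ne; have := h2.ne; have := h3.ne; have := h4.ne; have := h5.ne; have := h6.ne
    intro i j hij
    change Fin 6 at i j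
    change f i = f j at hij
    fin_cases i <;> fin_cases j <;> first | rfl | (exfalso; simp [f] at hij; simp_all)

lemma of_no4 {V : Type*} {G : SimpleGraph V} (h : No4 G) : ¬ ContainsCopy (cycGraph 4) G := by
  rintro ⟨f, hf⟩
  have hs : ∀ i j : ZMod 4, i ≠ j → j = i + 1 → G.Adj (f i) (f j) := by
    rintro i j hij rfl
    exact f.map_adj (cyc_adj_succ 4 i hij)
  refine h (f 0) (f 1) (f 2) (f 3) (hs _ _ ?_ ?_) (hs _ _ ?_ ?_) (hs _ _ ?_ ?_) (hs _ _ ?_ ?_)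
    (hf.ne ?_) (hf.ne ?_) <;> decide

lemma of_no6 {V : Type*} {G : SimpleGraph V} (h : No6 G) : ¬ ContainsCopy (cycGraph 6) G := by
  rintro ⟨f, hf⟩
  have hs : ∀ i j : ZMod 6, i ≠ j → j = i + 1 → G.Adj (f i) (f j) := by
    rintro i j hij rfl
    exact f.map_adj (cyc_adj_succ 6 i hij)
  refine h (f 0) (f 1) (f 2) (f 3) (f 4) (f 5) (hs _ _ ?_ ?_) (hs _ _ ?_ ?_) (hs _ _ ?_ ?_)
    (hs _ _ ?_ ?_) (hs _ _ ?_ ?_) (hs _ _ ?_ ?_)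
    (hf.ne ?_) (hf.ne ?_) (hf.ne ?_) (hf.ne ?_) (hf.ne ?_) (hf.ne ?_) (hf.ne ?_) (hf.ne ?_)
    (hf.ne ?_) <;> decide

lemma mem_of_graph {V P : Type*} [Fintype V] [Fintype P] (G : SimpleGraph V) (h4 : No4 G)
    (h6 : No6 G) (c : V → P) (hc : ∀ i j, i ≠ j → ∃ u v, c u = i ∧ c v = j ∧ G.Adj u v)
    (k r : ℕ) (hr : Fintype.card P = r) (hk : ∀ i, {v | c v = i}.ncard ≤ k) :
    ∃ (n : ℕ) (G : SimpleGraph (Fin n)),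
    ¬ ContainsCopy (cycGraph 4) G ∧ ¬ ContainsCopy (cycGraph 6) G ∧
    ∃ c : Fin n → Fin r, IsCompletePartition G c ∧
      ∀ i : Fin r, {v : Fin n | c v = i}.ncard ≤ k := by
  let eV := Fintype.equivFin V
  let eP := Fintype.equivFinOfCardEq hr
  refine ⟨Fintype.card V, G.comap eV.symm, of_no4 ?_, of_no6 ?_, fun v => eP (c (eV.symm v)), ?_, ?_⟩
  · intro a b c d a1 a2 a3 a4 m1 m2
    exact h4 _ _ _ _ a1 a2 a3 a4 (eV.symm.injective.ne m1) (eV.symm.injective.ne m2)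
  · intro a b c d e f a1 a2 a3 a4 a5 a6 m1 m2 m3 m4 m5 m6 m7 m8 m9
    have I := @eV.symm.injective.ne
    exact h6 _ _ _ _ _ _ a1 a2 a3 a4 a5 a6 (I m1) (I m2) (I m3) (I m4) (I m5) (I m6) (I m7)
      (I m8) (I m9)
  · intro i j hij
    obtain ⟨u, v, hu, hv, huv⟩ := hc (eP.symm i) (eP.symm j) (eP.symm.injective.ne hij)
    exact ⟨eV u, eV v, by simp [hu], by simp [hv], by simpa using huv⟩
  · intro i
    refine le_trans ?_ (hk (eP.symm i))
    refine Set.ncard_le_ncard_of_injOn eV.symm ?_ eV.symm.injective.injOn (Set.toFinite _)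
    intro v hv
    simp only [Set.mem_ofPred_eq] at hv ⊢
    simp [← hv]
section Con
variable {F : Type*} [Field F]

def RR (s : F →+* F) : (F × F × F) ⊕ (F × F) → (F × F × F) ⊕ (F × F) → Prop
  | .inl p, .inl w => w.2.1 + p.2.2 = w.1 * s p.1 ∧ p.2.1 + w.2.2 = p.1 * s w.1
  | .inl p, .inr w => p.1 = w.1 ∧ p.2.2 = w.2
  | .inr w, .inl p => p.1 = w.1 ∧ p.2.2 = w.2
  | .inr _, .inr _ => False

lemma RR_symm (s : F →+* F) : ∀ u v, RR s u v → RR s v u := by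
  rintro (u | u) (v | v) h
  · exact ⟨h.2, h.1⟩
  · exact h
  · exact h
  · exact h

def GG (s : F →+* F) : SimpleGraph ((F × F × F) ⊕ (F × F)) where
  Adj u v := u ≠ v ∧ RR s u v
  symm := ⟨fun u v h => ⟨h.1.symm, RR_symm s u v h.2⟩⟩
  loopless := ⟨fun _ h => h.1 rfl⟩

lemma ext4 (s : F →+* F) (p : F × F) (v1 v2 v3) (h1 : RR s (.inr p) v1)
    (h2 : RR s v1 v2) (h3 : RR s v2 v3) (h4 : RR s v3 (.inr p)) (m : v1 ≠ v3)
    (m2 : v2 ≠ .inr p) : False := by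
  obtain ⟨x, z⟩ := p
  rcases v1 with ⟨a1, b1, d1⟩ | v1
  swap
  · exact h1
  rcases v3 with ⟨a3, b3, d3⟩ | v3
  swap
  · exact h4
  rcases v2 with ⟨a2, b2, d2⟩ | ⟨a2, d2⟩
  · simp only [RR] at *
    apply m
    grind
  · simp only [RR] at *
    grind

lemma ext6 (s : F →+* F) (p : F × F) (v1 v2 v3 v4 v5) (h1 : RR s (.inr p) v1)
    (h2 : RR s v1 v2) (h3 : RR s v2 v3) (h4 : RR s v3 v4) (h5 : RR s v4 v5)
    (h6 : RR s v5 (.inr p)) (m : v1 ≠ v5)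
    (m2 : v2 ≠ .inr p) (m4 : v4 ≠ .inr p) : False := by
  obtain ⟨x, z⟩ := p
  rcases v1 with ⟨a1, b1, d1⟩ | v1
  swap
  · exact h1
  rcases v5 with ⟨a5, b5, d5⟩ | v5
  swap
  · exact h6
  rcases v2 with ⟨a2, b2, d2⟩ | ⟨a2, d2⟩
  swap
  · simp only [RR] at *
    grind
  rcases v4 with ⟨a4, b4, d4⟩ | ⟨a4, d4⟩
  swap
  · simp only [RR] at *
    grind
  have hb : b1 ≠ b5 := by
    rintro rfl
    simp only [RR] at *
    grind
  rcases v3 with ⟨a3, b3, d3⟩ | ⟨a3, d3⟩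
  · simp only [RR] at *
    obtain ⟨rfl, rfl⟩ := h1
    obtain ⟨rfl, rfl⟩ := h6
    have e1 : (a2 - a4) * (s a5 - s a3) = 0 := by linear_combination -h2.1 + h3.2 - h4.1 + h5.2
    rcases mul_eq_zero.1 e1 with e | e
    · have : a2 = a4 := sub_eq_zero.1 e
      subst this
      apply hb
      linear_combination h2.2 - h3.1 + h4.2 - h5.1
    · have : a5 = a3 := s.injective (sub_eq_zero.1 e)
      subst this
      apply hb
      linear_combination h2.2 - h3.1 + h4.2 - h5.1
  · simp only [RR] at *
    apply hb
    grind

lemma aff4 (s : F →+* F) (v0 v1 v2 v3 : F × F × F) (h1 : RR s (.inl v0) (.inl v1))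
    (h2 : RR s (.inl v1) (.inl v2)) (h3 : RR s (.inl v2) (.inl v3))
    (h4 : RR s (.inl v3) (.inl v0)) (m : v0 ≠ v2) (m1 : v1 ≠ v3) : False := by
  obtain ⟨a0, b0, d0⟩ := v0
  obtain ⟨a1, b1, d1⟩ := v1
  obtain ⟨a2, b2, d2⟩ := v2
  obtain ⟨a3, b3, d3⟩ := v3
  simp only [RR] at *
  have e1 : (a0 - a2) * (s a1 - s a3) = 0 := by linear_combination -h1.2 + h2.1 - h3.2 + h4.1
  rcases mul_eq_zero.1 e1 with e | e
  · have : a0 = a2 := sub_eq_zero.1 e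
    subst this
    apply m
    have : b0 = b2 := by linear_combination h1.2 - h2.1
    have : d0 = d2 := by linear_combination h1.1 - h2.2
    simp [*]
  · have : a1 = a3 := s.injective (sub_eq_zero.1 e)
    subst this
    apply m1
    have : b1 = b3 := by linear_combination h1.1 - h4.2
    have : d1 = d3 := by linear_combination h1.2 - h4.1
    simp [*]

lemma aff6 [CharP F 2] (s : F →+* F) (hs : ∀ x, s (s x) = x ^ 2) (v0 v1 v2 v3 v4 v5 : F × F × F)
    (h1 : RR s (.inl v0) (.inl v1)) (h2 : RR s (.inl v1) (.inl v2))
    (h3 : RR s (.inl v2) (.inl v3)) (h4 : RR s (.inl v3) (.inl v4))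
    (h5 : RR s (.inl v4) (.inl v5)) (h6 : RR s (.inl v5) (.inl v0))
    (m02 : v0 ≠ v2) (m24 : v2 ≠ v4) (m40 : v4 ≠ v0) (m13 : v1 ≠ v3) (m35 : v3 ≠ v5)
    (m51 : v5 ≠ v1) : False := by
  obtain ⟨a0, b0, d0⟩ := v0
  obtain ⟨a1, b1, d1⟩ := v1
  obtain ⟨a2, b2, d2⟩ := v2
  obtain ⟨a3, b3, d3⟩ := v3
  obtain ⟨a4, b4, d4⟩ := v4
  obtain ⟨a5, b5, d5⟩ := v5
  simp only [RR] at *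
  have two : (2 : F) = 0 := CharTwo.two_eq_zero
  -- points 0 2 4, lines 1 3 5
  have k1 : s d0 + s b1 = s a1 * a0 ^ 2 := by rw [← map_add, ← hs, ← map_mul, ← h1.1]; congr 1; ring
  have k2 : s d2 + s b1 = s a1 * a2 ^ 2 := by rw [← map_add, ← hs, ← map_mul, ← h2.2]; congr 1; ring
  have k3 : s d2 + s b3 = s a3 * a2 ^ 2 := by rw [← map_add, ← hs, ← map_mul, ← h3.1]; congr 1; ring
  have k4 : s d4 + s b3 = s a3 * a4 ^ 2 := by rw [← map_add, ← hs, ← map_mul, ← h4.2]; congr 1; ring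
  have k5 : s d4 + s b5 = s a5 * a4 ^ 2 := by rw [← map_add, ← hs, ← map_mul, ← h5.1]; congr 1; ring
  have k6 : s d0 + s b5 = s a5 * a0 ^ 2 := by rw [← map_add, ← hs, ← map_mul, ← h6.2]; congr 1; ring
  have n02 : a0 ≠ a2 := by
    rintro rfl
    apply m02
    have : b0 = b2 := by linear_combination h1.2 - h2.1
    have : d0 = d2 := by linear_combination h1.1 - h2.2
    simp [*]
  have n24 : a2 ≠ a4 := by
    rintro rfl
    apply m24
    have : b2 = b4 := by linear_combination h3.2 - h4.1
    have : d2 = d4 := by linear_combination h3.1 - h4.2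
    simp [*]
  have n40 : a4 ≠ a0 := by
    rintro rfl
    apply m40
    have : b4 = b0 := by linear_combination h5.2 - h6.1
    have : d4 = d0 := by linear_combination h5.1 - h6.2
    simp [*]
  have n35 : s a3 ≠ s a5 := by
    intro h
    have := s.injective h
    subst this
    apply m35
    have : b3 = b5 := by linear_combination h4.2 - h5.1
    have : d3 = d5 := by linear_combination h4.1 - h5.2
    simp [*]
  -- x = a0 - a2 with K = s a1, y = a2 - a4 with L = s a3, z = a4 - a0 with M = s a5
  have E1 : (a0 - a2) * s a1 + (a2 - a4) * s a3 + (a4 - a0) * s a5 = 0 := by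
    linear_combination -h1.2 + h2.1 - h3.2 + h4.1 - h5.2 + h6.1
  have E2 : (a0 ^ 2 - a2 ^ 2) * s a1 + (a2 ^ 2 - a4 ^ 2) * s a3 + (a4 ^ 2 - a0 ^ 2) * s a5 = 0 := by
    linear_combination -k1 + k2 - k3 + k4 - k5 + k6
  have E3 : (a2 - a4) * (a4 - a0) * (s a3 - s a5) = 0 := by
    linear_combination E2 - (a0 + a2) * E1
  rcases mul_eq_zero.1 E3 with e | e
  · rcases mul_eq_zero.1 e with e | e
    · exact n24 (sub_eq_zero.1 e)
    · exact n40 (sub_eq_zero.1 e)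
  · exact n35 (sub_eq_zero.1 e)

lemma GG_no4 (s : F →+* F) : No4 (GG s) := by
  rintro a b c d ⟨-, h1⟩ ⟨-, h2⟩ ⟨-, h3⟩ ⟨-, h4⟩ m n
  rcases a with a | a
  swap
  · exact ext4 s a b c d h1 h2 h3 h4 n m.symm
  rcases b with b | b
  swap
  · exact ext4 s b c d _ h2 h3 h4 h1 m.symm n.symm
  rcases c with c | c
  swap
  · exact ext4 s c d _ _ h3 h4 h1 h2 n.symm m
  rcases d with d | d
  swap
  · exact ext4 s d _ _ _ h4 h1 h2 h3 m n
  exact aff4 s a b c d h1 h2 h3 h4 (fun h => m (by rw [h])) (fun h => n (by rw [h]))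

lemma GG_no6 [CharP F 2] (s : F →+* F) (hs : ∀ x, s (s x) = x ^ 2) : No6 (GG s) := by
  rintro a b c d e f ⟨-, h1⟩ ⟨-, h2⟩ ⟨-, h3⟩ ⟨-, h4⟩ ⟨-, h5⟩ ⟨-, h6⟩ ac ad ae bd be bf ce cf df
  rcases a with a | a
  swap
  · exact ext6 s a _ _ _ _ _ h1 h2 h3 h4 h5 h6 bf ac.symm ae.symm
  rcases b with b | b
  swap
  · exact ext6 s b _ _ _ _ _ h2 h3 h4 h5 h6 h1 ac.symm bd.symm bf.symm
  rcases c with c | c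
  swap
  · exact ext6 s c _ _ _ _ _ h3 h4 h5 h6 h1 h2 bd.symm ce.symm ac
  rcases d with d | d
  swap
  · exact ext6 s d _ _ _ _ _ h4 h5 h6 h1 h2 h3 ce.symm df.symm bd
  rcases e with e | e
  swap
  · exact ext6 s e _ _ _ _ _ h5 h6 h1 h2 h3 h4 df.symm ae ce
  rcases f with f | f
  swap
  · exact ext6 s f _ _ _ _ _ h6 h1 h2 h3 h4 h5 ae bf df
  have I : ∀ {x y : F × F × F}, (Sum.inl x : (F × F × F) ⊕ (F × F)) ≠ Sum.inl y → x ≠ y :=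
    fun h g => h (by rw [g])
  exact aff6 s hs a b c d e f h1 h2 h3 h4 h5 h6 (I ac) (I ce) (I ae.symm) (I bd) (I df) (I bf.symm)

def cc : (F × F × F) ⊕ (F × F) → F × F
  | .inl p => (p.2.1, p.2.2)
  | .inr p => (p.2, p.1)

lemma cc_complete (s : F →+* F) (hs : ∀ x, s (s x) = x ^ 2) (hadd : ∀ x : F, x + x = 0) (i j : F × F) (hij : i ≠ j) :
    ∃ u v, cc u = i ∧ cc v = j ∧ (GG s).Adj u v := by
  suffices ∃ u v, cc u = i ∧ cc v = j ∧ RR s u v by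
    obtain ⟨u, v, hu, hv, h⟩ := this
    refine ⟨u, v, hu, hv, ?_, h⟩
    rintro rfl
    exact hij (hu.symm.trans hv)
  obtain ⟨b, d⟩ := i
  obtain ⟨y, z⟩ := j
  by_cases h1 : b = z
  · subst h1
    exact ⟨.inr (d, b), .inl (d, y, b), rfl, rfl, rfl, rfl⟩
  by_cases h2 : y = d
  · subst h2
    exact ⟨.inl (z, b, y), .inr (z, y), rfl, rfl, rfl, rfl⟩
  have hA : y + d ≠ 0 := fun h => h2 (by linear_combination h - hadd d)
  have hB : b + z ≠ 0 := fun h => h1 (by linear_combination h - hadd z)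
  have hA' : s (y + d) ≠ 0 := (map_ne_zero s).2 hA
  have hB' : s (b + z) ≠ 0 := (map_ne_zero s).2 hB
  refine ⟨.inl (s (y + d) / (b + z), b, d), .inl (s (b + z) / (y + d), y, z), rfl, rfl, ?_, ?_⟩
  · change y + d = s (b + z) / (y + d) * s (s (y + d) / (b + z))
    rw [map_div₀, hs]; field_simp
  · change b + z = s (y + d) / (b + z) * s (s (b + z) / (y + d))
    rw [map_div₀, hs]; field_simp

lemma cc_card [Fintype F] (i : F × F) : {v | cc v = i}.ncard ≤ Fintype.card F + 1 := by
  have : {v | cc v = i} ⊆ Set.range (fun o : Option F => match o with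
      | some a => (Sum.inl (a, i.1, i.2) : (F × F × F) ⊕ (F × F))
      | none => Sum.inr (i.2, i.1)) := by
    rintro (⟨a, b, d⟩ | ⟨a, d⟩) h
    · refine ⟨some a, ?_⟩
      have h : (b, d) = i := h
      subst h; rfl
    · refine ⟨none, ?_⟩
      have h : (d, a) = i := h
      subst h; rfl
  refine (Set.ncard_le_ncard this (Set.toFinite _)).trans ?_
  rw [← Set.image_univ]
  refine (Set.ncard_image_le (Set.toFinite _)).trans ?_
  simp [Set.ncard_univ, Nat.card_eq_fintype_card]
end Con

lemma upper_mem (e : ℕ) :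
    ∃ (n : ℕ) (G : SimpleGraph (Fin n)),
    ¬ ContainsCopy (cycGraph 4) G ∧ ¬ ContainsCopy (cycGraph 6) G ∧
    ∃ c : Fin n → Fin (2 ^ (2 * (2 * e + 1))), IsCompletePartition G c ∧
      ∀ i, {v : Fin n | c v = i}.ncard ≤ 2 ^ (2 * e + 1) + 1 := by
  let F := GaloisField 2 (2 * e + 1)
  have : Fintype F := Fintype.ofFinite F
  have hc : Fintype.card F = 2 ^ (2 * e + 1) := by
    rw [← Nat.card_eq_fintype_card]
    exact GaloisField.card 2 _ (by omega)
  let s : F →+* F := iterateFrobenius F 2 (e + 1)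
  have hs : ∀ x, s (s x) = x ^ 2 := by
    intro x
    simp only [s, iterateFrobenius_def]
    rw [← pow_mul]
    have : 2 ^ (e + 1) * 2 ^ (e + 1) = 2 ^ (2 * e + 1) * 2 := by ring
    rw [this, pow_mul, ← hc, FiniteField.pow_card]
  rw [← hc]
  refine mem_of_graph (GG s) (GG_no4 s) (GG_no6 s hs) cc (cc_complete s hs CharTwo.add_self_eq_zero) _ _ ?_ cc_card
  rw [Fintype.card_prod, hc]; ring
section Low
open scoped Classical in
lemma path_count {n : ℕ} (G : SimpleGraph (Fin n)) (h4 : No4 G) (h6 : No6 G)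
    (D : Finset (Fin n × Fin n)) (hD : ∀ p ∈ D, G.Adj p.1 p.2) :
    ∑ p ∈ D, (G.degree p.1 - 2) * (G.degree p.2 - 1) ≤ n ^ 2 := by
  let A : Fin n × Fin n → Finset (Fin n) := fun p =>
    ((G.neighborFinset p.1) \ {p.2}) \ (G.neighborFinset p.1 ∩ G.neighborFinset p.2)
  let B : Fin n × Fin n → Finset (Fin n) := fun p => (G.neighborFinset p.2).erase p.1
  have hA : ∀ p ∈ D, G.degree p.1 - 2 ≤ (A p).card := by
    intro p hp
    have h1 : (G.neighborFinset p.1 ∩ G.neighborFinset p.2).card ≤ 1 := by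
      rw [Finset.card_le_one]
      intro a ha b hb
      simp only [Finset.mem_inter, SimpleGraph.mem_neighborFinset] at ha hb
      by_contra hab
      exact h4 p.1 a p.2 b ha.1 ha.2.symm hb.2 hb.1.symm (hD p hp).ne hab
    have h2 := Finset.le_card_sdiff {p.2} (G.neighborFinset p.1)
    have h3 := Finset.le_card_sdiff (G.neighborFinset p.1 ∩ G.neighborFinset p.2)
      (G.neighborFinset p.1 \ {p.2})
    rw [G.card_neighborFinset_eq_degree, Finset.card_singleton] at h2
    simp only [A]
    omega
  have hB : ∀ p ∈ D, G.degree p.2 - 1 ≤ (B p).card := by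
    intro p hp
    simp only [B]
    rw [← G.card_neighborFinset_eq_degree]
    exact Finset.pred_card_le_card_erase
  calc ∑ p ∈ D, (G.degree p.1 - 2) * (G.degree p.2 - 1)
      ≤ ∑ p ∈ D, (A p ×ˢ B p).card := by
        refine Finset.sum_le_sum fun p hp => ?_
        rw [Finset.card_product]
        exact Nat.mul_le_mul (hA p hp) (hB p hp)
    _ = (D.sigma fun p => A p ×ˢ B p).card := (Finset.card_sigma _ _).symm
    _ ≤ (Finset.univ : Finset (Fin n × Fin n)).card := by
        refine Finset.card_le_card_of_injOn (fun t => t.2) (fun _ _ => Finset.mem_coe.2 (Finset.mem_univ _)) ?_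
        rintro ⟨⟨x, y⟩, ⟨u, v⟩⟩ h ⟨⟨x', y'⟩, ⟨u', v'⟩⟩ h' heq
        simp only [Prod.mk.injEq] at heq
        obtain ⟨rfl, rfl⟩ := heq
        simp only [A, B, Finset.coe_sigma, Set.mem_sigma_iff, Finset.mem_coe, Finset.mem_product,
          Finset.mem_sdiff, Finset.mem_inter, Finset.mem_erase, SimpleGraph.mem_neighborFinset,
          Finset.mem_singleton, not_and] at h h'
        obtain ⟨hd, ⟨⟨xu, uy⟩, nyu⟩, vx, yv⟩ := h
        obtain ⟨hd', ⟨⟨xu', uy'⟩, nyu'⟩, vx', yv'⟩ := h'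
        have nyu := nyu xu
        have nyu' := nyu' xu'
        have xy := hD _ hd
        have xy' := hD _ hd'
        simp only at xy xy'
        have uv : u ≠ v := by rintro rfl; exact nyu yv
        have hxy' : x ≠ y' := by rintro rfl; exact nyu' xu
        have hx'y : x' ≠ y := by rintro rfl; exact nyu xu'
        have key : x = x' ∧ y = y' := by
          by_cases e1 : x = x'
          · subst e1
            refine ⟨rfl, ?_⟩
            by_contra e2
            exact h4 x y v y' xy yv yv'.symm xy'.symm vx.symm e2
          · by_cases e2 : y = y'
            · subst e2
              exact (h4 u x y x' xu.symm xy xy'.symm xu' uy e1).elim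
            · exact (h6 u x y v y' x' xu.symm xy yv yv'.symm xy'.symm xu' uy uv uy' vx.symm
                hxy' e1 e2 hx'y.symm vx').elim
        obtain ⟨rfl, rfl⟩ := key
        rfl
    _ = n ^ 2 := by simp [sq]

lemma amgm3 (u v : ℝ) (hu : 0 < u) (hv : 0 < v) : 3 ≤ u * v + 1 / u + 1 / v := by
  have h : 3 * (u * v) ≤ (u * v) ^ 2 + u + v := by
    nlinarith [sq_nonneg (u * v - 1), sq_nonneg (u - v), mul_pos hu hv, sq_nonneg (u + v - 2), sq_nonneg (u-1), sq_nonneg (v-1), mul_nonneg hu.le (sq_nonneg (v-1)), mul_nonneg hv.le (sq_nonneg (u-1))]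
  have huv := mul_pos hu hv
  have : u * v + 1 / u + 1 / v = ((u * v) ^ 2 + u + v) / (u * v) := by
    field_simp; ring
  rw [this, le_div_iff₀ huv]; exact h

open scoped Classical in
lemma holder_count {n : ℕ} (G : SimpleGraph (Fin n))
    (D : Finset (Fin n × Fin n)) (hD : ∀ p ∈ D, G.Adj p.1 p.2) :
    (D.card : ℝ) ^ 3 ≤ (n : ℝ) ^ 2 * ∑ p ∈ D, (G.degree p.1 : ℝ) * G.degree p.2 := by
  rcases D.eq_empty_or_nonempty with rfl | hne
  · simp
  have hN : (0 : ℝ) < D.card := by exact_mod_cast hne.card_pos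
  have hn : (0 : ℝ) < n := by
    obtain ⟨p, _⟩ := hne
    exact_mod_cast (Nat.zero_le _).trans_lt p.1.2
  have hpos : ∀ p ∈ D, 0 < (G.degree p.1 : ℝ) ∧ 0 < (G.degree p.2 : ℝ) := by
    intro p hp
    have h := hD p hp
    constructor
    · exact_mod_cast (G.degree_pos_iff_exists_adj _).2 ⟨_, h⟩
    · exact_mod_cast (G.degree_pos_iff_exists_adj _).2 ⟨_, h.symm⟩
  have h1 : ∑ p ∈ D, 1 / (G.degree p.1 : ℝ) ≤ n := by
    calc ∑ p ∈ D, 1 / (G.degree p.1 : ℝ)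
        ≤ ∑ p : Fin n × Fin n, if G.Adj p.1 p.2 then 1 / (G.degree p.1 : ℝ) else 0 := by
          rw [← Finset.sum_filter]
          refine Finset.sum_le_sum_of_subset_of_nonneg ?_ ?_
          · intro p hp; simp [hD p hp]
          · intros; positivity
      _ = ∑ x : Fin n, ∑ y : Fin n, if G.Adj x y then 1 / (G.degree x : ℝ) else 0 := by
          rw [Fintype.sum_prod_type]
      _ ≤ ∑ x : Fin n, (1 : ℝ) := by
          refine Finset.sum_le_sum fun x _ => ?_
          rw [← Finset.sum_filter, Finset.sum_const, nsmul_eq_mul]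
          have : (Finset.univ.filter fun y => G.Adj x y).card = G.degree x := by
            rw [← G.card_neighborFinset_eq_degree, G.neighborFinset_eq_filter]
          rw [this, mul_one_div]
          exact div_self_le_one _
      _ = n := by simp
  have h2 : ∑ p ∈ D, 1 / (G.degree p.2 : ℝ) ≤ n := by
    calc ∑ p ∈ D, 1 / (G.degree p.2 : ℝ)
        ≤ ∑ p : Fin n × Fin n, if G.Adj p.1 p.2 then 1 / (G.degree p.2 : ℝ) else 0 := by
          rw [← Finset.sum_filter]
          refine Finset.sum_le_sum_of_subset_of_nonneg ?_ ?_
          · intro p hp; simp [hD p hp]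
          · intros; positivity
      _ = ∑ y : Fin n, ∑ x : Fin n, if G.Adj y x then 1 / (G.degree y : ℝ) else 0 := by
          rw [Fintype.sum_prod_type_right]
          simp only [G.adj_comm]
      _ ≤ ∑ x : Fin n, (1 : ℝ) := by
          refine Finset.sum_le_sum fun x _ => ?_
          rw [← Finset.sum_filter, Finset.sum_const, nsmul_eq_mul]
          have : (Finset.univ.filter fun y => G.Adj x y).card = G.degree x := by
            rw [← G.card_neighborFinset_eq_degree, G.neighborFinset_eq_filter]
          rw [this, mul_one_div]
          exact div_self_le_one _
      _ = n := by simp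
  set N : ℝ := (D.card : ℝ)
  set S := ∑ p ∈ D, (G.degree p.1 : ℝ) * G.degree p.2
  have h3 : 3 * N ≤ (n / N) ^ 2 * S + (N / n) * (∑ p ∈ D, 1 / (G.degree p.1 : ℝ))
      + (N / n) * ∑ p ∈ D, 1 / (G.degree p.2 : ℝ) := by
    have : 3 * N = ∑ p ∈ D, (3 : ℝ) := by simp [N, mul_comm]
    rw [this]
    simp only [S]
    rw [Finset.mul_sum, Finset.mul_sum, Finset.mul_sum, ← Finset.sum_add_distrib,
      ← Finset.sum_add_distrib]
    refine Finset.sum_le_sum fun p hp => ?_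
    obtain ⟨a, b⟩ := hpos p hp
    have := amgm3 (n / N * G.degree p.1) (n / N * G.degree p.2) (by positivity) (by positivity)
    refine this.trans (le_of_eq ?_)
    field_simp
  have h4 : 3 * N ≤ (n / N) ^ 2 * S + 2 * N := by
    have c : 0 ≤ N / n := by positivity
    have e1 := mul_le_mul_of_nonneg_left h1 c
    have e2 := mul_le_mul_of_nonneg_left h2 c
    have : N / n * n = N := by field_simp
    rw [this] at e1 e2
    linarith
  have h5 : N ≤ n ^ 2 * S / N ^ 2 := by
    have : (n / N) ^ 2 * S = n ^ 2 * S / N ^ 2 := by rw [div_pow]; ring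
    linarith
  rw [le_div_iff₀ (by positivity)] at h5
  linarith [h5, show N * N ^ 2 = N ^ 3 by ring]

open scoped Classical in
lemma low_main {n r k δ : ℕ} (G : SimpleGraph (Fin n)) (h4 : No4 G) (h6 : No6 G)
    (c : Fin n → Fin r) (hc : IsCompletePartition G c)
    (hk : ∀ i : Fin r, {v : Fin n | c v = i}.ncard ≤ k) (hδ : 2 ≤ δ)
    (hpos : (0:ℝ) ≤ (r : ℝ) ^ 2 - r - 2 * δ * (r * k)) :
    ((r : ℝ) ^ 2 - r - 2 * δ * (r * k)) ^ 3 * (1 - 2 / (δ : ℝ)) ^ 2 ≤ ((r : ℝ) * k) ^ 4 := by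
  have hn : n ≤ r * k := by
    calc n = (Finset.univ : Finset (Fin n)).card := by simp
      _ = ∑ i : Fin r, (Finset.univ.filter fun v => c v = i).card :=
        Finset.card_eq_sum_card_fiberwise (fun _ _ => Finset.mem_coe.2 (Finset.mem_univ _))
      _ ≤ ∑ i : Fin r, k := by
        refine Finset.sum_le_sum fun i _ => ?_
        have := hk i
        rw [Set.ncard_eq_toFinset_card'] at this
        refine le_trans (le_of_eq ?_) this
        congr 1
        ext; simp
      _ = r * k := by simp
  let E : Finset (Fin n × Fin n) := Finset.univ.filter fun p => G.Adj p.1 p.2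
  have hE : r * r - r ≤ E.card := by
    have : r * r - r = (Finset.univ : Finset (Fin r)).offDiag.card := by
      rw [Finset.offDiag_card]; simp
    rw [this]
    refine Finset.card_le_card_of_surjOn (fun p => (c p.1, c p.2)) ?_
    rintro ⟨i, j⟩ hp
    simp only [Finset.mem_coe, Finset.mem_offDiag] at hp
    obtain ⟨u, v, rfl, rfl, huv⟩ := hc i j hp.2.2
    exact ⟨(u, v), by simpa [E] using huv, rfl⟩
  let D := E.filter fun p => δ ≤ G.degree p.1 ∧ δ ≤ G.degree p.2
  let X := E.filter fun p => G.degree p.1 < δ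
  let Y := E.filter fun p => G.degree p.2 < δ
  have hX : X.card ≤ δ * n := by
    have := Finset.card_le_mul_card_image_of_maps_to (f := Prod.fst) (s := X)
      (t := (Finset.univ : Finset (Fin n))) (fun _ _ => Finset.mem_univ _) δ ?_
    · simpa using this
    intro x _
    by_cases hx : G.degree x < δ
    · refine le_trans ?_ hx.le
      rw [← G.card_neighborFinset_eq_degree]
      refine Finset.card_le_card_of_injOn Prod.snd ?_ ?_
      · rintro ⟨a, b⟩ h
        simp only [X, E, Finset.mem_coe, Finset.mem_filter] at h
        obtain ⟨⟨⟨_, h⟩, _⟩, rfl⟩ := h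
        simpa using h
      · rintro ⟨a, b⟩ h ⟨a', b'⟩ h' e
        simp only [X, E, Finset.mem_coe, Finset.mem_filter] at h h' e
        rw [h.2, h'.2, e]
    · rw [Finset.card_eq_zero.2]
      · exact Nat.zero_le _
      · rw [Finset.filter_eq_empty_iff]
        rintro p hp rfl
        exact hx (Finset.mem_filter.1 hp).2
  have hY : Y.card ≤ δ * n := by
    refine le_trans ?_ hX
    refine Finset.card_le_card_of_injOn Prod.swap ?_ Prod.swap_injective.injOn
    rintro ⟨a, b⟩ h
    simp only [X, Y, E, Finset.mem_coe, Finset.mem_filter, Prod.swap] at h ⊢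
    exact ⟨⟨Finset.mem_univ _, h.1.2.symm⟩, h.2⟩
  have hEs : E.card ≤ D.card + X.card + Y.card := by
    have : E ⊆ D ∪ X ∪ Y := by
      intro p hp
      simp only [D, X, Y, Finset.mem_union, Finset.mem_filter, hp, true_and]
      omega
    exact (Finset.card_le_card this).trans ((Finset.card_union_le _ _).trans
      (Nat.add_le_add_right (Finset.card_union_le _ _) _))
  have hDadj : ∀ p ∈ D, G.Adj p.1 p.2 := by
    intro p hp
    simp only [D, E, Finset.mem_filter] at hp
    exact hp.1.2
  have P := path_count G h4 h6 D hDadj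
  have H := holder_count G D hDadj
  have hδ' : (2 : ℝ) ≤ δ := by exact_mod_cast hδ
  have ht0 : 0 ≤ 1 - 2 / (δ : ℝ) := by
    rw [sub_nonneg, div_le_one (by linarith)]; exact hδ'
  have hS : (∑ p ∈ D, (G.degree p.1 : ℝ) * G.degree p.2) * (1 - 2 / (δ : ℝ)) ^ 2 ≤ (n : ℝ) ^ 2 := by
    have : ((∑ p ∈ D, (G.degree p.1 - 2) * (G.degree p.2 - 1) : ℕ) : ℝ) ≤ (n : ℝ) ^ 2 := by
      exact_mod_cast P
    refine le_trans ?_ this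
    rw [Finset.sum_mul]
    push_cast
    refine Finset.sum_le_sum fun p hp => ?_
    have hd := (Finset.mem_filter.1 hp).2
    have gen : ∀ d : ℕ, δ ≤ d → (d : ℝ) * (1 - 2 / (δ : ℝ)) ≤ (d : ℝ) - 2 := by
      intro d hd
      have hd : (δ : ℝ) ≤ d := by exact_mod_cast hd
      have : 2 ≤ (d : ℝ) * (2 / δ) := by
        rw [← mul_div_assoc, le_div_iff₀ (by linarith)]; linarith
      linarith
    have g1 := gen _ hd.1
    have g2 := gen _ hd.2
    rw [Nat.cast_sub (by omega), Nat.cast_sub (by omega)]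
    push_cast
    calc (G.degree p.1 : ℝ) * G.degree p.2 * (1 - 2 / (δ : ℝ)) ^ 2
        = (G.degree p.1 * (1 - 2 / (δ : ℝ))) * (G.degree p.2 * (1 - 2 / (δ : ℝ))) := by ring
      _ ≤ _ := by
        have a1 : 0 ≤ (G.degree p.2 : ℝ) * (1 - 2 / (δ : ℝ)) := by positivity
        have a0 : 0 ≤ (G.degree p.1 : ℝ) * (1 - 2 / (δ : ℝ)) := by positivity
        exact mul_le_mul g1 (by linarith) a1 (by linarith)
  have hnr : (n : ℝ) ≤ r * k := by exact_mod_cast hn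
  have hD : (r : ℝ) ^ 2 - r - 2 * δ * (r * k) ≤ D.card := by
    have h1 : r * r ≤ D.card + δ * n + δ * n + r := by omega
    have h1 : (r : ℝ) * r ≤ D.card + δ * n + δ * n + r := by exact_mod_cast h1
    have h2 : (δ : ℝ) * n ≤ δ * (r * k) := by gcongr
    nlinarith
  calc ((r : ℝ) ^ 2 - r - 2 * δ * (r * k)) ^ 3 * (1 - 2 / (δ : ℝ)) ^ 2
      ≤ (D.card : ℝ) ^ 3 * (1 - 2 / (δ : ℝ)) ^ 2 := by gcongr
    _ ≤ ((n : ℝ) ^ 2 * ∑ p ∈ D, (G.degree p.1 : ℝ) * G.degree p.2) * (1 - 2 / (δ : ℝ)) ^ 2 := by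
        gcongr
    _ = (n : ℝ) ^ 2 * ((∑ p ∈ D, (G.degree p.1 : ℝ) * G.degree p.2) * (1 - 2 / (δ : ℝ)) ^ 2) := by
        ring
    _ ≤ (n : ℝ) ^ 2 * (n : ℝ) ^ 2 := by gcongr
    _ = (n : ℝ) ^ 4 := by ring
    _ ≤ _ := by gcongr
end Low

lemma fbounds (e : ℕ) (he : 3 ≤ e) :
    (1 - 1 / ((2:ℝ) ^ (2 * e + 1)) ^ 2 - 2 / 2 ^ e) ^ 3 * (1 - 2 / (2 : ℝ) ^ e) ^ 2 ≤
      (fC4C6 (2 ^ (2 * (2 * e + 1))) : ℝ) / (2 ^ (2 * e + 1) : ℝ) ∧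
    (fC4C6 (2 ^ (2 * (2 * e + 1))) : ℝ) / (2 ^ (2 * e + 1) : ℝ) ≤ 1 + 1 / 2 ^ (2 * e + 1) := by
  have hU := upper_mem e
  have hle : fC4C6 (2 ^ (2 * (2 * e + 1))) ≤ 2 ^ (2 * e + 1) + 1 := Nat.sInf_le hU
  have hmem := Nat.sInf_mem (s := {k : ℕ | ∃ (n : ℕ) (G : SimpleGraph (Fin n)),
    ¬ ContainsCopy (cycGraph 4) G ∧ ¬ ContainsCopy (cycGraph 6) G ∧
    ∃ c : Fin n → Fin (2 ^ (2 * (2 * e + 1))), IsCompletePartition G c ∧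
      ∀ i, {v : Fin n | c v = i}.ncard ≤ k}) ⟨_, hU⟩
  change ∃ (n : ℕ) (G : SimpleGraph (Fin n)),
    ¬ ContainsCopy (cycGraph 4) G ∧ ¬ ContainsCopy (cycGraph 6) G ∧
    ∃ c : Fin n → Fin (2 ^ (2 * (2 * e + 1))), IsCompletePartition G c ∧
      ∀ i, {v : Fin n | c v = i}.ncard ≤ fC4C6 (2 ^ (2 * (2 * e + 1))) at hmem
  obtain ⟨n, G, h4, h6, c, hc, hk⟩ := hmem
  generalize fC4C6 (2 ^ (2 * (2 * e + 1))) = k at *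
  have hle' : (k : ℝ) ≤ 2 ^ (2 * e + 1) + 1 := by exact_mod_cast hle
  have hd8 : (8 : ℝ) ≤ 2 ^ e := by
    calc (8 : ℝ) = 2 ^ 3 := by norm_num
      _ ≤ _ := pow_le_pow_right₀ (by norm_num) he
  have main := low_main (δ := 2 ^ e) G (no4_of h4) (no6_of h6) c hc hk
    (by calc 2 = 2 ^ 1 := rfl
          _ ≤ 2 ^ e := Nat.pow_le_pow_right (by norm_num) (by omega))
  have hr : ((2 ^ (2 * (2 * e + 1)) : ℕ) : ℝ) = ((2:ℝ) ^ (2 * e + 1)) ^ 2 := by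
    push_cast; rw [← pow_mul]; congr 1; ring
  rw [hr] at main
  have hqd : (2:ℝ) ^ (2 * e + 1) = 2 * (2 ^ e) ^ 2 := by ring
  push_cast at main
  generalize (2:ℝ) ^ (2 * e + 1) = q at *
  generalize (2:ℝ) ^ e = d at *
  have hq : 128 ≤ q := by nlinarith
  have hq0 : 0 < q := by linarith
  have hd0 : 0 < d := by linarith
  constructor
  swap
  · rw [div_le_iff₀ hq0]
    have : (1 + 1 / q) * q = q + 1 := by field_simp
    linarith
  -- lower
  set t := 1 - 1 / q ^ 2 - 2 / d with ht
  have e2 : 2 / d ≤ 1 / 4 := by rw [div_le_iff₀ hd0]; linarith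
  have e2' : 0 < 2 / d := by positivity
  have e1 : 1 / q ^ 2 ≤ 1 / 4 := by
    apply one_div_le_one_div_of_le <;> nlinarith
  have e1' : 0 < 1 / q ^ 2 := by positivity
  have t0 : 0 ≤ t := by linarith
  have t1 : t ≤ 1 := by linarith
  have w0 : 0 ≤ 1 - 2 / d := by linarith
  have w1 : 1 - 2 / d ≤ 1 := by linarith
  have R1 : t ^ 3 * (1 - 2 / d) ^ 2 ≤ 1 :=
    mul_le_one₀ (pow_le_one₀ t0 t1) (by positivity) (pow_le_one₀ w0 w1)
  rcases le_or_gt (q : ℝ) k with hkq | hkq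
  · exact R1.trans (by rw [le_div_iff₀ hq0]; linarith)
  -- k < q
  have hb : q ^ 4 * t ≤ (q ^ 2) ^ 2 - q ^ 2 - 2 * d * (q ^ 2 * k) := by
    have hx : q ^ 4 * t = q ^ 4 - q ^ 2 - 2 * q ^ 4 / d := by
      rw [ht]; field_simp
    have hy : 2 * q ^ 4 / d = 4 * d * q ^ 3 := by
      rw [div_eq_iff hd0.ne']
      linear_combination 2 * q ^ 3 * hqd
    have hz : 2 * d * (q ^ 2 * k) ≤ 2 * d * (q ^ 2 * q) := by gcongr
    have : 0 ≤ d * q ^ 3 := by positivity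
    rw [hx, hy]
    nlinarith
  have hb0 : 0 ≤ q ^ 4 * t := by positivity
  have m := main (hb0.trans hb)
  have m2 : (q ^ 4 * t) ^ 3 * (1 - 2 / d) ^ 2 ≤ (q ^ 2 * k) ^ 4 := by
    refine le_trans ?_ m
    gcongr
  have m3 : t ^ 3 * (1 - 2 / d) ^ 2 ≤ ((k : ℝ) / q) ^ 4 := by
    rw [div_pow, le_div_iff₀ (by positivity)]
    have : 0 < q ^ 8 := by positivity
    refine le_of_mul_le_mul_left ?_ this
    calc _ = (q ^ 4 * t) ^ 3 * (1 - 2 / d) ^ 2 := by ring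
      _ ≤ _ := m2
      _ = _ := by ring
  refine m3.trans ?_
  have k1 : (k : ℝ) / q ≤ 1 := by rw [div_le_one hq0]; exact hkq.le
  exact pow_le_of_le_one (by positivity) k1 (by norm_num)

theorem fC4C6_asymptotics :
    Filter.Tendsto
      (fun e : ℕ => (fC4C6 (2 ^ (2 * (2 * e + 1))) : ℝ) / (2 ^ (2 * e + 1) : ℝ))
      Filter.atTop (nhds 1) := by
  have hd : Filter.Tendsto (fun e : ℕ => (2:ℝ) ^ e) Filter.atTop Filter.atTop :=
    tendsto_pow_atTop_atTop_of_one_lt (by norm_num)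
  have hq : Filter.Tendsto (fun e : ℕ => (2:ℝ) ^ (2 * e + 1)) Filter.atTop Filter.atTop :=
    hd.comp (Filter.tendsto_atTop_mono (fun e => by simp only [id]; omega) Filter.tendsto_id)
  have a1 : Filter.Tendsto (fun e : ℕ => 1 / (2:ℝ) ^ (2 * e + 1)) Filter.atTop (nhds 0) :=
    hq.const_div_atTop 1
  have a2 : Filter.Tendsto (fun e : ℕ => 2 / (2:ℝ) ^ e) Filter.atTop (nhds 0) :=
    hd.const_div_atTop 2
  have a3 : Filter.Tendsto (fun e : ℕ => 1 / ((2:ℝ) ^ (2 * e + 1)) ^ 2) Filter.atTop (nhds 0) := by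
    have := a1.pow 2
    simpa using this
  have up : Filter.Tendsto (fun e : ℕ => 1 + 1 / (2:ℝ) ^ (2 * e + 1)) Filter.atTop (nhds 1) := by
    simpa using a1.const_add 1
  have lo : Filter.Tendsto (fun e : ℕ => (1 - 1 / ((2:ℝ) ^ (2 * e + 1)) ^ 2 - 2 / 2 ^ e) ^ 3 *
      (1 - 2 / (2 : ℝ) ^ e) ^ 2) Filter.atTop (nhds 1) := by
    have b := (((a3.const_sub 1).sub a2).pow 3).mul ((a2.const_sub 1).pow 2)
    simpa using b
  refine tendsto_of_tendsto_of_tendsto_of_le_of_le' lo up ?_ ?_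
  · filter_upwards [Filter.eventually_ge_atTop 3] with e he using (fbounds e he).1
  · filter_upwards [Filter.eventually_ge_atTop 3] with e he using (fbounds e he).2
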